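/- The following four identities hold: (I_{t₁}⊗L_{t₂,t₃})∘(Y_{t₁,t₂}⊗I_{t₃}) = Y_{t₁,t₆}∘L_{t₄,t₃} + ((−1)^{σ₂}·λ₃/(λ₂+λ₃))·Y'_{t₁,t₆}∘L'_{t₄,t₃} as linear maps V_{t₄}⊗V_{t₃} → V_{t₁}⊗V_{t₆}; (I_{t₁}⊗L'_{t₂,t₃})∘(Y'_{t₁,t₂}⊗I_{t₃}) = Y'_{t₁,t₉}∘L'_{t₇,t₃} − ((−1)^{σ₂}·λ₁/(λ₁+λ₂))·Y_{t₁,t₉}∘L_{t₇,t₃} as linear maps V_{t₇}⊗V_{t₃} → V_{t₁}⊗V_{t₉}; (I_{t₁}⊗L'_{t₂,t₃})∘(Y_{t₁,t₂}⊗I_{t₃}) = Y_{t₁,t₉}∘L'_{t₄,t₃} as linear maps V_{t₄}⊗V_{t₃} → V_{t₁}⊗V_{t₉}; and (I_{t₁}⊗L_{t₂,t₃})∘(Y'_{t₁,t₂}⊗I_{t₃}) = κ·Y'_{t₁,t₆}∘L_{t₇,t₃} as linear maps V_{t₇}⊗V_{t₃} → V_{t₁}⊗V_{t₆}. -/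

import Mathlib

set_option linter.unusedVariables false

open TensorProduct

noncomputable section

/-- a triple t = (λ, μ, σ) ∈ ℚ × ℚ × ℤ/2 -/
structure Triple where
  lam : ℚ
  mu : ℚ
  sg : ZMod 2

instance : Add Triple := ⟨fun a b => ⟨a.lam + b.lam, a.mu + b.mu, a.sg + b.sg⟩⟩
instance : Neg Triple := ⟨fun a => ⟨-a.lam, -a.mu, -a.sg⟩⟩
instance : Sub Triple := ⟨fun a b => a + -b⟩

def e₂ : Triple := ⟨0, 1, 0⟩
def e₃ : Triple := ⟨0, 0, 1⟩
/-- t* = (−λ, −μ, σ+1) -/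
def Triple.star (t : Triple) : Triple := ⟨-t.lam, -t.mu, t.sg + 1⟩

/-- the underlying space of every V_t: basis v = (1,0) (degree σ), w = (0,1) (degree σ+1) -/
abbrev V : Type := ℚ × ℚ
abbrev VV : Type := V ⊗[ℚ] V
abbrev VVV : Type := V ⊗[ℚ] VV

def vv : V := (1, 0)
def ww : V := (0, 1)

/-- (−1)^σ -/
def sgn (s : ZMod 2) : ℚ := if s = 0 then 1 else -1

/-- H: v ↦ (μ+1)v, w ↦ (μ−1)w -/
def opH (t : Triple) : V →ₗ[ℚ] V :=
  LinearMap.prodMap ((t.mu + 1) • LinearMap.id) ((t.mu - 1) • LinearMap.id)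
/-- D: multiplication by λ -/
def opD (t : Triple) : V →ₗ[ℚ] V := t.lam • LinearMap.id
/-- E: v ↦ 0, w ↦ λv -/
def opE (t : Triple) : V →ₗ[ℚ] V := (LinearMap.inl ℚ ℚ ℚ) ∘ₗ (t.lam • LinearMap.snd ℚ ℚ ℚ)
/-- F: v ↦ w, w ↦ 0 -/
def opF (t : Triple) : V →ₗ[ℚ] V := (LinearMap.inr ℚ ℚ ℚ) ∘ₗ (LinearMap.fst ℚ ℚ ℚ)
/-- the parity operator x ↦ (−1)^{deg x} x on V_t -/
def opJ (t : Triple) : V →ₗ[ℚ] V :=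
  LinearMap.prodMap (sgn t.sg • LinearMap.id) ((- sgn t.sg) • LinearMap.id)

/-- the four generators H, D, E, F of gl(1|1) -/
inductive Gen | H | D | E | F

/-- H and D have degree 0; E and F have degree 1 -/
def Gen.isEven : Gen → Bool
  | .H => true | .D => true | .E => false | .F => false

def op : Gen → Triple → V →ₗ[ℚ] V
  | .H, t => opH t
  | .D, t => opD t
  | .E, t => opE t
  | .F, t => opF t

/-- the super-Leibniz action X·(x⊗y) = (X·x)⊗y + (−1)^{deg X·deg x}·x⊗(X·y)
on V_{t₁}⊗V_{t₂} (the sign being implemented by the parity operator) -/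
def op2 (g : Gen) (t₁ t₂ : Triple) : VV →ₗ[ℚ] VV :=
  TensorProduct.map (op g t₁) LinearMap.id +
  TensorProduct.map (if g.isEven then LinearMap.id else opJ t₁) (op g t₂)

/-- the linear map ℚ×ℚ → M sending (1,0) ↦ p and (0,1) ↦ q -/
def bmap {M : Type*} [AddCommGroup M] [Module ℚ M] (p q : M) : V →ₗ[ℚ] M :=
  LinearMap.coprod (LinearMap.toSpanSingleton ℚ M p) (LinearMap.toSpanSingleton ℚ M q)

/-- Y_{t₁,t₂} : V_{t₁+t₂+e₂} → V_{t₁}⊗V_{t₂} -/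
def Ymap (t₁ t₂ : Triple) : V →ₗ[ℚ] VV :=
  bmap (vv ⊗ₜ[ℚ] vv) (ww ⊗ₜ[ℚ] vv + sgn t₁.sg • (vv ⊗ₜ[ℚ] ww))

/-- Y'_{t₁,t₂} : V_{t₁+t₂−e₂+e₃} → V_{t₁}⊗V_{t₂} -/
def Y'map (t₁ t₂ : Triple) : V →ₗ[ℚ] VV :=
  bmap ((t₁.lam + t₂.lam)⁻¹ •
      (t₁.lam • (vv ⊗ₜ[ℚ] ww) - (sgn t₁.sg * t₂.lam) • (ww ⊗ₜ[ℚ] vv)))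
    (ww ⊗ₜ[ℚ] ww)

/-- L_{t₁,t₂} : V_{t₁}⊗V_{t₂} → V_{t₁+t₂+e₂} -/
def Lmap (t₁ t₂ : Triple) : VV →ₗ[ℚ] V :=
  TensorProduct.lift (LinearMap.mk₂ ℚ
    (fun x y => ((x.1 * y.1 : ℚ),
      (t₁.lam / (t₁.lam + t₂.lam)) * (x.2 * y.1)
        + (sgn t₁.sg * t₂.lam / (t₁.lam + t₂.lam)) * (x.1 * y.2)))
    (by intro x x' y; apply Prod.ext <;> simp <;> ring)
    (by intro a x y; apply Prod.ext <;> simp [smul_eq_mul] <;> ring)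
    (by intro x y y'; apply Prod.ext <;> simp <;> ring)
    (by intro a x y; apply Prod.ext <;> simp [smul_eq_mul] <;> ring))

/-- L'_{t₁,t₂} : V_{t₁}⊗V_{t₂} → V_{t₁+t₂−e₂+e₃} -/
def L'map (t₁ t₂ : Triple) : VV →ₗ[ℚ] V :=
  TensorProduct.lift (LinearMap.mk₂ ℚ
    (fun x y => ((x.1 * y.2 - sgn t₁.sg * (x.2 * y.1) : ℚ), (x.2 * y.2 : ℚ)))
    (by intro x x' y; apply Prod.ext <;> simp <;> ring)
    (by intro a x y; apply Prod.ext <;> simp [smul_eq_mul] <;> ring)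
    (by intro x y y'; apply Prod.ext <;> simp <;> ring)
    (by intro a x y; apply Prod.ext <;> simp [smul_eq_mul] <;> ring))

/-- ∩_t : V_{t*}⊗V_t → ℚ -/
def capMap (t : Triple) : VV →ₗ[ℚ] ℚ :=
  TensorProduct.lift (LinearMap.mk₂ ℚ
    (fun x y => (x.1 * y.2 + sgn t.sg * (x.2 * y.1) : ℚ))
    (by intro x x' y; simp; ring)
    (by intro a x y; simp [smul_eq_mul]; ring)
    (by intro x y y'; simp; ring)
    (by intro a x y; simp [smul_eq_mul]; ring))

/-- ∪_t : ℚ → V_{t*}⊗V_t -/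
def cupMap (t : Triple) : ℚ →ₗ[ℚ] VV :=
  LinearMap.toSpanSingleton ℚ VV (ww ⊗ₜ[ℚ] vv - sgn t.sg • (vv ⊗ₜ[ℚ] ww))


/-- t₄ = t₁+t₂+e₂ -/
def T4 (t₁ t₂ : Triple) : Triple := t₁ + t₂ + e₂
/-- t₅ = t₄+t₃+e₂ -/
def T5 (t₁ t₂ t₃ : Triple) : Triple := T4 t₁ t₂ + t₃ + e₂
/-- t₆ = t₂+t₃+e₂ -/
def T6 (t₂ t₃ : Triple) : Triple := t₂ + t₃ + e₂
/-- t₇ = t₄−2e₂+e₃ -/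
def T7 (t₁ t₂ : Triple) : Triple := T4 t₁ t₂ - e₂ - e₂ + e₃
/-- t₈ = t₅−2e₂+e₃ -/
def T8 (t₁ t₂ t₃ : Triple) : Triple := T5 t₁ t₂ t₃ - e₂ - e₂ + e₃
/-- t₉ = t₆−2e₂+e₃ -/
def T9 (t₂ t₃ : Triple) : Triple := T6 t₂ t₃ - e₂ - e₂ + e₃
/-- κ = λ₂(λ₁+λ₂+λ₃)/((λ₁+λ₂)(λ₂+λ₃)) -/
def kap (t₁ t₂ t₃ : Triple) : ℚ :=
  t₂.lam * (t₁.lam + t₂.lam + t₃.lam) / ((t₁.lam + t₂.lam) * (t₂.lam + t₃.lam))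

theorem sgn_sq (a : ZMod 2) : sgn a * sgn a = 1 := by
  unfold sgn; split_ifs <;> norm_num

theorem sgn_add (a b : ZMod 2) : sgn (a + b) = sgn a * sgn b := by
  have h : ∀ a : ZMod 2, a = 0 ∨ a = 1 := by decide
  have h2 : (1 : ZMod 2) + 1 = 0 := by decide
  rcases h a with rfl | rfl <;> rcases h b with rfl | rfl <;> simp [sgn, h2]

theorem sgn_T4 (a b : Triple) : sgn (T4 a b).sg = sgn a.sg * sgn b.sg := by
  have : (T4 a b).sg = a.sg + b.sg + 0 := rfl
  rw [this, add_zero, sgn_add]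

theorem sgn_T7 (a b : Triple) : sgn (T7 a b).sg = - (sgn a.sg * sgn b.sg) := by
  have : (T7 a b).sg = a.sg + b.sg + 0 + -0 + -0 + 1 := rfl
  rw [this]
  simp only [neg_zero, add_zero, sgn_add]
  simp [sgn]

theorem lam_T4 (a b : Triple) : (T4 a b).lam = a.lam + b.lam := by
  have : (T4 a b).lam = a.lam + b.lam + 0 := rfl
  rw [this, add_zero]

theorem lam_T6 (a b : Triple) : (T6 a b).lam = a.lam + b.lam := lam_T4 a b

theorem lam_T7 (a b : Triple) : (T7 a b).lam = a.lam + b.lam := by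
  have : (T7 a b).lam = a.lam + b.lam + 0 + -0 + -0 + 0 := rfl
  rw [this]; ring

theorem lam_T9 (a b : Triple) : (T9 a b).lam = a.lam + b.lam := lam_T7 a b

theorem bmap_v {M : Type*} [AddCommGroup M] [Module ℚ M] (p q : M) : bmap p q vv = p := by
  simp [bmap, vv]

theorem bmap_w {M : Type*} [AddCommGroup M] [Module ℚ M] (p q : M) : bmap p q ww = q := by
  simp [bmap, ww]

theorem ext_VV {M : Type*} [AddCommGroup M] [Module ℚ M] (f g : VV →ₗ[ℚ] M)
    (h1 : f (vv ⊗ₜ vv) = g (vv ⊗ₜ vv)) (h2 : f (vv ⊗ₜ ww) = g (vv ⊗ₜ ww))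
    (h3 : f (ww ⊗ₜ vv) = g (ww ⊗ₜ vv)) (h4 : f (ww ⊗ₜ ww) = g (ww ⊗ₜ ww)) : f = g := by
  apply TensorProduct.ext'
  intro x y
  have hx : ∀ x : V, x = x.1 • vv + x.2 • ww := by
    intro x; ext <;> simp [vv, ww]
  rw [hx x, hx y]
  simp only [TensorProduct.add_tmul, TensorProduct.tmul_add, ← TensorProduct.smul_tmul',
    TensorProduct.tmul_smul, map_add, map_smul, h1, h2, h3, h4]

theorem L_vv (a b : Triple) : Lmap a b (vv ⊗ₜ vv) = vv := by
  simp [Lmap, vv]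
theorem L_wv (a b : Triple) :
    Lmap a b (ww ⊗ₜ vv) = (a.lam / (a.lam + b.lam)) • ww := by
  simp [Lmap, vv, ww]
theorem L_vw (a b : Triple) :
    Lmap a b (vv ⊗ₜ ww) = (sgn a.sg * b.lam / (a.lam + b.lam)) • ww := by
  simp [Lmap, vv, ww]
theorem L_ww (a b : Triple) : Lmap a b (ww ⊗ₜ ww) = 0 := by
  simp [Lmap, ww]
theorem L'_vv (a b : Triple) : L'map a b (vv ⊗ₜ vv) = 0 := by
  simp [L'map, vv]
theorem L'_wv (a b : Triple) : L'map a b (ww ⊗ₜ vv) = (- sgn a.sg) • vv := by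
  simp [L'map, vv, ww]
theorem L'_vw (a b : Triple) : L'map a b (vv ⊗ₜ ww) = vv := by
  simp [L'map, vv, ww]
theorem L'_ww (a b : Triple) : L'map a b (ww ⊗ₜ ww) = ww := by
  simp [L'map, ww]

/-- Corollary 27. -/
theorem stmt15 (t₁ t₂ t₃ : Triple)
    (h₁ : t₁.lam ≠ 0) (h₂ : t₂.lam ≠ 0) (h₃ : t₃.lam ≠ 0)
    (h₁₂ : t₁.lam + t₂.lam ≠ 0) (h₂₃ : t₂.lam + t₃.lam ≠ 0)
    (h₁₂₃ : t₁.lam + t₂.lam + t₃.lam ≠ 0) :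
    TensorProduct.map LinearMap.id (Lmap t₂ t₃)
        ∘ₗ (TensorProduct.assoc ℚ V V V).toLinearMap
        ∘ₗ TensorProduct.map (Ymap t₁ t₂) LinearMap.id =
      Ymap t₁ (T6 t₂ t₃) ∘ₗ Lmap (T4 t₁ t₂) t₃
      + (sgn t₂.sg * t₃.lam / (t₂.lam + t₃.lam)) •
          (Y'map t₁ (T6 t₂ t₃) ∘ₗ L'map (T4 t₁ t₂) t₃) ∧
    TensorProduct.map LinearMap.id (L'map t₂ t₃)
        ∘ₗ (TensorProduct.assoc ℚ V V V).toLinearMap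
        ∘ₗ TensorProduct.map (Y'map t₁ t₂) LinearMap.id =
      Y'map t₁ (T9 t₂ t₃) ∘ₗ L'map (T7 t₁ t₂) t₃
      - (sgn t₂.sg * t₁.lam / (t₁.lam + t₂.lam)) •
          (Ymap t₁ (T9 t₂ t₃) ∘ₗ Lmap (T7 t₁ t₂) t₃) ∧
    TensorProduct.map LinearMap.id (L'map t₂ t₃)
        ∘ₗ (TensorProduct.assoc ℚ V V V).toLinearMap
        ∘ₗ TensorProduct.map (Ymap t₁ t₂) LinearMap.id =
      Ymap t₁ (T9 t₂ t₃) ∘ₗ L'map (T4 t₁ t₂) t₃ ∧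
    TensorProduct.map LinearMap.id (Lmap t₂ t₃)
        ∘ₗ (TensorProduct.assoc ℚ V V V).toLinearMap
        ∘ₗ TensorProduct.map (Y'map t₁ t₂) LinearMap.id =
      kap t₁ t₂ t₃ • (Y'map t₁ (T6 t₂ t₃) ∘ₗ Lmap (T7 t₁ t₂) t₃) := by
  have q1 := sgn_sq t₁.sg
  have q2 := sgn_sq t₂.sg
  have h123' : t₁.lam + (t₂.lam + t₃.lam) ≠ 0 := by rwa [← add_assoc]
  refine ⟨?_, ?_, ?_, ?_⟩ <;> apply ext_VV <;>
    simp only [LinearMap.comp_apply, LinearMap.add_apply, LinearMap.sub_apply,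
      LinearMap.smul_apply, LinearEquiv.coe_coe, TensorProduct.map_tmul, LinearMap.id_apply,
      Ymap, Y'map, bmap_v, bmap_w, L_vv, L_vw, L_wv, L_ww, L'_vv, L'_vw, L'_wv, L'_ww,
      TensorProduct.add_tmul, TensorProduct.sub_tmul, ← TensorProduct.smul_tmul',
      TensorProduct.tmul_smul, map_add, map_sub, map_smul, map_zero, TensorProduct.assoc_tmul,
      TensorProduct.tmul_zero, sgn_T4, sgn_T7, lam_T4, lam_T6, lam_T7, lam_T9, kap] <;>
    generalize sgn t₁.sg = s at * <;> generalize sgn t₂.sg = r at * <;>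
    match_scalars <;> (try field_simp) <;> grind
end
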